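/- If Γ ⊩_⊞ Δ, then there exist a formula φ ∈ Γ with var(φ) ⊆ var(Δ) and a formula ψ ∈ Δ with var(ψ) ⊆ var(Γ); that is, the logic ⊩_⊞ is both a left-inclusion and a right-inclusion logic. -/

import Mathlib

/-- Formulas built from countably many propositional variables with a single
binary connective `⊞` (platypus). -/
inductive Fm : Type where
  | var : ℕ → Fm
  | pl : Fm → Fm → Fm
deriving DecidableEq

namespace Fm

/-- The set of propositional variables occurring in a formula. -/
def vars : Fm → Set ℕ
  | var n => {n}
  | pl a b => vars a ∪ vars b

/-- A `𝔅_⊞`-valuation: a two-valued function such that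
`v (φ ⊞ ψ) ∈ {min (v φ) (v ψ), max (v φ) (v ψ)}`. -/
def IsVal (v : Fm → Bool) : Prop :=
  ∀ a b : Fm, v (a.pl b) = (v a && v b) ∨ v (a.pl b) = (v a || v b)

/-- The multiple-conclusion consequence `Γ ⊩_⊞ Δ`. -/
def Mc (Γ Δ : Set Fm) : Prop :=
  ∀ v : Fm → Bool, IsVal v → (∀ φ ∈ Γ, v φ = true) → ∃ ψ ∈ Δ, v ψ = true

/-- The single-conclusion consequence `Γ ⊢_⊞ φ`. -/
def Sc (Γ : Set Fm) (φ : Fm) : Prop := Mc Γ {φ}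

end Fm

namespace Fm

variable {v : Fm → Bool} {Γ Δ : Set Fm}

theorem IsVal.not (hv : IsVal v) : IsVal fun φ => !v φ := fun a b =>
  (hv a b).symm.imp (fun hor => by simp only [hor, Bool.not_or])
    (fun hand => by simp only [hand, Bool.not_and])

/-- Complementing valuations exchanges the two clauses for `⊞`, so a countermodel to `Δ ⊩ Γ`
becomes one to `Γ ⊩ Δ`. -/
protected theorem Mc.symm (h : Mc Γ Δ) : Mc Δ Γ := by
  intro v hv hΔ
  by_contra! hΓ
  obtain ⟨ψ, hψ, hvψ⟩ := h (fun φ => !v φ) hv.not fun φ hφ => by simpa using hΓ φ hφ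
  simp [hΔ ψ hψ] at hvψ

open Classical in
/-- The valuation making true exactly the formulas whose variables all lie in `X`; it reads every
`⊞` as a conjunction. -/
noncomputable def varsSubsetVal (X : Set ℕ) (φ : Fm) : Bool :=
  decide (φ.vars ⊆ X)

theorem varsSubsetVal_eq_true_iff {X : Set ℕ} {φ : Fm} :
    varsSubsetVal X φ = true ↔ φ.vars ⊆ X := by
  simp only [varsSubsetVal, decide_eq_true_iff]

theorem isVal_varsSubsetVal (X : Set ℕ) : IsVal (varsSubsetVal X) := fun a b => .inl <| by
  rw [Bool.eq_iff_iff]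
  simp only [Bool.and_eq_true, varsSubsetVal_eq_true_iff, vars, Set.union_subset_iff]

theorem Mc.exists_vars_subset {X : Set ℕ} (h : Mc Γ Δ) (hΓ : ∀ φ ∈ Γ, φ.vars ⊆ X) :
    ∃ ψ ∈ Δ, ψ.vars ⊆ X := by
  simp only [← varsSubsetVal_eq_true_iff] at hΓ ⊢
  exact h _ (isVal_varsSubsetVal X) hΓ

theorem Mc.exists_vars_subset_biUnion (h : Mc Γ Δ) : ∃ ψ ∈ Δ, ψ.vars ⊆ ⋃ φ ∈ Γ, φ.vars :=
  h.exists_vars_subset fun _ hφ => Set.subset_biUnion_of_mem (u := vars) hφ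

end Fm

open Fm in
/-- `⊩_⊞` is a left- and right-inclusion logic: if `Γ ⊩_⊞ Δ`
then some `φ ∈ Γ` has all its variables among those of `Δ`, and some `ψ ∈ Δ`
has all its variables among those of `Γ`. -/
theorem platypus_inclusion (Γ Δ : Set Fm) (h : Mc Γ Δ) :
    (∃ φ ∈ Γ, φ.vars ⊆ ⋃ ψ ∈ Δ, ψ.vars) ∧
    (∃ ψ ∈ Δ, ψ.vars ⊆ ⋃ φ ∈ Γ, φ.vars) :=
  ⟨h.symm.exists_vars_subset_biUnion, h.exists_vars_subset_biUnion⟩
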